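/- Under Independence, Relevance, Monotonicity, and the Double exclusion restriction, the reduced form decomposes as ΔE[Y|Z] = E[Y(1,1)−Y(0,0); {C1,C2}] + E[Y(1,0)−Y(0,0); {C1,N2}] + E[Y(1,1)−Y(0,1); {C1,A2}]. (Lemma 2.5) -/

import Mathlib

open MeasureTheory ProbabilityTheory

noncomputable section

variable {Ω : Type*} [MeasurableSpace Ω]

/-- Observed first-part treatment: `D1 = D1(1)·Z + D1(0)·(1−Z)`. -/
def obsD1 (Z : Ω → ℝ) (D1 : Bool → Ω → ℝ) (ω : Ω) : ℝ :=
  D1 true ω * Z ω + D1 false ω * (1 - Z ω)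

/-- Observed second-part treatment. -/
def obsD2 (Z : Ω → ℝ) (D1 : Bool → Ω → ℝ) (D2 : Bool → Bool → Ω → ℝ) (ω : Ω) : ℝ :=
  (D2 true true ω * obsD1 Z D1 ω + D2 true false ω * (1 - obsD1 Z D1 ω)) * Z ω +
  (D2 false true ω * obsD1 Z D1 ω + D2 false false ω * (1 - obsD1 Z D1 ω)) * (1 - Z ω)

/-- Summary treatment `D∧ = D1·D2`. -/
def obsDand (Z : Ω → ℝ) (D1 : Bool → Ω → ℝ) (D2 : Bool → Bool → Ω → ℝ) (ω : Ω) : ℝ :=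
  obsD1 Z D1 ω * obsD2 Z D1 D2 ω

/-- Summary treatment `D∨ = D1 + D2 − D1·D2`. -/
def obsDor (Z : Ω → ℝ) (D1 : Bool → Ω → ℝ) (D2 : Bool → Bool → Ω → ℝ) (ω : Ω) : ℝ :=
  obsD1 Z D1 ω + obsD2 Z D1 D2 ω - obsD1 Z D1 ω * obsD2 Z D1 D2 ω

/-- Observed outcome `Y = Σ_{d1,d2} Y(Z,d1,d2)·1{D1=d1, D2=d2}`, written out using that the
observed treatments and the instrument are {0,1}-valued. The first index of `Yp` is `z`, the
second is `d1`, the third is `d2`. -/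
def obsY (Z : Ω → ℝ) (D1 : Bool → Ω → ℝ) (D2 : Bool → Bool → Ω → ℝ)
    (Yp : Bool → Bool → Bool → Ω → ℝ) (ω : Ω) : ℝ :=
  (Yp true true true ω * obsD1 Z D1 ω * obsD2 Z D1 D2 ω +
   Yp true false true ω * (1 - obsD1 Z D1 ω) * obsD2 Z D1 D2 ω +
   Yp true true false ω * obsD1 Z D1 ω * (1 - obsD2 Z D1 D2 ω) +
   Yp true false false ω * (1 - obsD1 Z D1 ω) * (1 - obsD2 Z D1 D2 ω)) * Z ω +
  (Yp false true true ω * obsD1 Z D1 ω * obsD2 Z D1 D2 ω +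
   Yp false false true ω * (1 - obsD1 Z D1 ω) * obsD2 Z D1 D2 ω +
   Yp false true false ω * obsD1 Z D1 ω * (1 - obsD2 Z D1 D2 ω) +
   Yp false false false ω * (1 - obsD1 Z D1 ω) * (1 - obsD2 Z D1 D2 ω)) * (1 - Z ω)

/-- `ΔE[A|Z] := E[A | Z = 1] − E[A | Z = 0]`, expectations under conditional measures. -/
def dE (μ : Measure Ω) (Z A : Ω → ℝ) : ℝ :=
  (∫ ω, A ω ∂(μ[|Z ⁻¹' {1}])) - (∫ ω, A ω ∂(μ[|Z ⁻¹' {0}]))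

/-- The full-complier event `{C1,C2}`. -/
def CCev (D1 : Bool → Ω → ℝ) (D2 : Bool → Bool → Ω → ℝ) : Set Ω :=
  {ω | D1 true ω - D1 false ω = 1 ∧ D2 true true ω - D2 false false ω = 1}

/-- The mover event `{C1,N2}`. -/
def CNev (D1 : Bool → Ω → ℝ) (D2 : Bool → Bool → Ω → ℝ) : Set Ω :=
  {ω | D1 true ω - D1 false ω = 1 ∧ D2 true true ω = 0 ∧ D2 false false ω = 0}

/-- The mover event `{C1,A2}`. -/
def CAev (D1 : Bool → Ω → ℝ) (D2 : Bool → Bool → Ω → ℝ) : Set Ω :=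
  {ω | D1 true ω - D1 false ω = 1 ∧ D2 true true ω = 1 ∧ D2 false false ω = 1}

/-- The mover event `{N1,C2}`. -/
def NCev (D1 : Bool → Ω → ℝ) (D2 : Bool → Bool → Ω → ℝ) : Set Ω :=
  {ω | D1 true ω = 0 ∧ D1 false ω = 0 ∧ D2 true false ω - D2 false false ω = 1}

/-- The mover event `{A1,C2}`. -/
def ACev (D1 : Bool → Ω → ℝ) (D2 : Bool → Bool → Ω → ℝ) : Set Ω :=
  {ω | D1 true ω = 1 ∧ D1 false ω = 1 ∧ D2 true true ω - D2 false true ω = 1}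

/-- Conditioning on the instrument does not change the mean of a function of a vector that is
independent of the instrument. -/
theorem integral_cond_of_indep {E : Type*} [MeasurableSpace E]
    (μ : Measure Ω) [IsProbabilityMeasure μ] (V : Ω → E) (Z : Ω → ℝ)
    (hV : Measurable V) (hZ : Measurable Z) (hi : IndepFun V Z μ) (z : ℝ)
    (hz : μ (Z ⁻¹' {z}) ≠ 0) (g : E → ℝ) (hg : Measurable g) :
    ∫ ω, g (V ω) ∂(μ[|Z ⁻¹' {z}]) = ∫ ω, g (V ω) ∂μ := by
  have hms : MeasurableSet (Z ⁻¹' {z}) := hZ (measurableSet_singleton z)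
  have hmap : Measure.map V (μ[|Z ⁻¹' {z}]) = Measure.map V μ := by
    ext A hA
    rw [Measure.map_apply hV hA, Measure.map_apply hV hA, cond_apply hms, Set.inter_comm,
      hi.measure_inter_preimage_eq_mul _ _ hA (measurableSet_singleton z), mul_comm, mul_assoc,
      ENNReal.mul_inv_cancel hz (measure_ne_top _ _), mul_one]
  rw [← integral_map (φ := V) hV.aemeasurable hg.aestronglyMeasurable, hmap,
    integral_map hV.aemeasurable hg.aestronglyMeasurable]

/-- Outcome under a forced instrument value, as a function of the potential variables. -/
def gOut (z : Bool) (v : (Bool → ℝ) × (Bool → Bool → ℝ) × (Bool → Bool → Bool → ℝ)) : ℝ :=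
  v.2.2 z true true * v.1 z * (v.2.1 z true * v.1 z + v.2.1 z false * (1 - v.1 z)) +
  v.2.2 z false true * (1 - v.1 z) * (v.2.1 z true * v.1 z + v.2.1 z false * (1 - v.1 z)) +
  v.2.2 z true false * v.1 z * (1 - (v.2.1 z true * v.1 z + v.2.1 z false * (1 - v.1 z))) +
  v.2.2 z false false * (1 - v.1 z) * (1 - (v.2.1 z true * v.1 z + v.2.1 z false * (1 - v.1 z)))

theorem measurable_gOut (z : Bool) : Measurable (gOut z) := by
  unfold gOut
  fun_prop

theorem stmt_10
    (μ : Measure Ω) [IsProbabilityMeasure μ]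
    (Z : Ω → ℝ) (D1 : Bool → Ω → ℝ) (D2 : Bool → Bool → Ω → ℝ)
    (Yp : Bool → Bool → Bool → Ω → ℝ)
    (hZmeas : Measurable Z)
    (hD1meas : ∀ b, Measurable (D1 b))
    (hD2meas : ∀ b b', Measurable (D2 b b'))
    (hYmeas : ∀ z d1 d2, Measurable (Yp z d1 d2))
    (hYint : ∀ z d1 d2, Integrable (Yp z d1 d2) μ)
    (hZ01 : ∀ ω, Z ω = 0 ∨ Z ω = 1)
    (hZpos : 0 < μ (Z ⁻¹' {1})) (hZlt : μ (Z ⁻¹' {1}) < 1)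
    (hD101 : ∀ b ω, D1 b ω = 0 ∨ D1 b ω = 1)
    (hD201 : ∀ b b' ω, D2 b b' ω = 0 ∨ D2 b b' ω = 1)
    (hindep : IndepFun
      (fun ω => ((fun b => D1 b ω), (fun b b' => D2 b b' ω), (fun z d1 d2 => Yp z d1 d2 ω))) Z μ)
    (hrel1 : 0 < dE μ Z (obsD1 Z D1))
    (hrel2 : 0 < dE μ Z (obsD2 Z D1 D2))
    (hrelAnd : 0 < dE μ Z (obsDand Z D1 D2))
    (hrelOr : 0 < dE μ Z (obsDor Z D1 D2))
    (hmono1 : ∀ᵐ ω ∂μ, D1 false ω ≤ D1 true ω)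
    (hmono2 : ∀ᵐ ω ∂μ,
      D2 false true ω * D1 false ω + D2 false false ω * (1 - D1 false ω) ≤
        D2 true true ω * D1 true ω + D2 true false ω * (1 - D1 true ω))
    (hexcl : ∀ d1 d2, ∀ᵐ ω ∂μ, Yp true d1 d2 ω = Yp false d1 d2 ω)
    (hdexcl : ∀ d1, ∀ᵐ ω ∂μ, D2 true d1 ω = D2 false d1 ω) :
    dE μ Z (obsY Z D1 D2 Yp) =
      (∫ ω in CCev D1 D2, (Yp true true true ω - Yp true false false ω) ∂μ) +
      (∫ ω in CNev D1 D2, (Yp true true false ω - Yp true false false ω) ∂μ) +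
      (∫ ω in CAev D1 D2, (Yp true true true ω - Yp true false true ω) ∂μ) := by
  have hm1 : MeasurableSet (Z ⁻¹' {1}) := hZmeas (measurableSet_singleton 1)
  have hm0 : MeasurableSet (Z ⁻¹' {0}) := hZmeas (measurableSet_singleton 0)
  have h0 : μ (Z ⁻¹' {0}) ≠ 0 := by
    intro h
    have hc : Z ⁻¹' {0} = (Z ⁻¹' {1})ᶜ := by
      ext ω
      rcases hZ01 ω with h | h <;> simp [h]
    rw [hc, prob_compl_eq_zero_iff hm1] at h
    exact hZlt.ne h
  set V : Ω → (Bool → ℝ) × (Bool → Bool → ℝ) × (Bool → Bool → Bool → ℝ) :=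
    fun ω => ((fun b => D1 b ω), (fun b b' => D2 b b' ω), (fun z d1 d2 => Yp z d1 d2 ω)) with hVdef
  have hV : Measurable V := by
    refine Measurable.prodMk ?_ (Measurable.prodMk ?_ ?_)
    · exact measurable_pi_lambda _ hD1meas
    · exact measurable_pi_lambda _ fun b => measurable_pi_lambda _ (hD2meas b)
    · exact measurable_pi_lambda _ fun b => measurable_pi_lambda _ fun c =>
        measurable_pi_lambda _ (hYmeas b c)
  have e1 : ∫ ω, obsY Z D1 D2 Yp ω ∂(μ[|Z ⁻¹' {1}]) = ∫ ω, gOut true (V ω) ∂μ := by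
    rw [← integral_cond_of_indep μ V Z hV hZmeas hindep 1 hZpos.ne' _ (measurable_gOut true)]
    refine integral_congr_ae ?_
    filter_upwards [ae_cond_mem hm1] with ω hω
    have hω' : Z ω = 1 := hω
    simp [obsY, obsD2, obsD1, gOut, hVdef, hω']
  have e0 : ∫ ω, obsY Z D1 D2 Yp ω ∂(μ[|Z ⁻¹' {0}]) = ∫ ω, gOut false (V ω) ∂μ := by
    rw [← integral_cond_of_indep μ V Z hV hZmeas hindep 0 h0 _ (measurable_gOut false)]
    refine integral_congr_ae ?_
    filter_upwards [ae_cond_mem hm0] with ω hω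
    have hω' : Z ω = 0 := hω
    simp [obsY, obsD2, obsD1, gOut, hVdef, hω']
  have hint : ∀ z, Integrable (fun ω => gOut z (V ω)) μ := by
    intro z
    have hb : Integrable (fun ω => |Yp z true true ω| + |Yp z false true ω| +
        |Yp z true false ω| + |Yp z false false ω|) μ :=
      (((hYint z true true).abs.add (hYint z false true).abs).add
        (hYint z true false).abs).add (hYint z false false).abs
    refine hb.mono' ((measurable_gOut z).comp hV).aestronglyMeasurable (ae_of_all _ fun ω => ?_)
    have p1 := abs_nonneg (Yp z true true ω)
    have p2 := abs_nonneg (Yp z false true ω)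
    have p3 := abs_nonneg (Yp z true false ω)
    have p4 := abs_nonneg (Yp z false false ω)
    rw [Real.norm_eq_abs]
    rcases hD101 z ω with h | h <;> rcases hD201 z true ω with h' | h' <;>
      rcases hD201 z false ω with h'' | h'' <;> simp [gOut, hVdef, h, h', h''] <;> linarith
  have mCC : MeasurableSet (CCev D1 D2) := by
    unfold CCev
    exact (measurableSet_eq_fun (by fun_prop) (by fun_prop)).inter
      (measurableSet_eq_fun (by fun_prop) (by fun_prop))
  have mCN : MeasurableSet (CNev D1 D2) := by
    unfold CNev
    exact (measurableSet_eq_fun (by fun_prop) (by fun_prop)).inter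
      ((measurableSet_eq_fun (by fun_prop) (by fun_prop)).inter
        (measurableSet_eq_fun (by fun_prop) (by fun_prop)))
  have mCA : MeasurableSet (CAev D1 D2) := by
    unfold CAev
    exact (measurableSet_eq_fun (by fun_prop) (by fun_prop)).inter
      ((measurableSet_eq_fun (by fun_prop) (by fun_prop)).inter
        (measurableSet_eq_fun (by fun_prop) (by fun_prop)))
  have iCC : Integrable ((CCev D1 D2).indicator
      (fun ω => Yp true true true ω - Yp true false false ω)) μ :=
    ((hYint true true true).sub (hYint true false false)).indicator mCC
  have iCN : Integrable ((CNev D1 D2).indicator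
      (fun ω => Yp true true false ω - Yp true false false ω)) μ :=
    ((hYint true true false).sub (hYint true false false)).indicator mCN
  have iCA : Integrable ((CAev D1 D2).indicator
      (fun ω => Yp true true true ω - Yp true false true ω)) μ :=
    ((hYint true true true).sub (hYint true false true)).indicator mCA
  unfold dE
  rw [e1, e0, ← integral_sub (hint true) (hint false), ← integral_indicator mCC,
    ← integral_indicator mCN, ← integral_indicator mCA, ← integral_add' iCC iCN,
    ← integral_add' (iCC.add iCN) iCA]
  refine integral_congr_ae ?_
  filter_upwards [hmono1, hmono2, hexcl true true, hexcl true false, hexcl false true,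
    hexcl false false, hdexcl true, hdexcl false] with ω m1 m2 x1 x2 x3 x4 y1 y2
  rcases hD101 true ω with h | h <;> rcases hD101 false ω with h' | h' <;>
    rcases hD201 true true ω with k | k <;> rcases hD201 false false ω with k' | k' <;>
    simp only [Set.indicator, CCev, CNev, CAev, Set.mem_ofPred_eq, gOut, hVdef, h, h', k, k',
      ← y1, y2, ← x1, ← x2, ← x3, ← x4, Pi.add_apply] at m1 m2 ⊢ <;>
    (try norm_num at m1) <;> (try norm_num at m2) <;> (try norm_num)
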